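/- Let M be a matching of maximum weight among all matchings of size n/3 in G. Consider the complete directed graph on vertex set V(M) in which the arc (u, v) has weight w(uv). Then there exists a set A of arcs in which every vertex has in-degree at most 1 and out-degree at most 2, whose total weight is at least 2·w(Y_5) + 2·w(Y_6) + w(P*_7) + w(P*_8) + Σ_{xyz ∈ P*_7 ∪ P*_8} max{w(xy), w(yz)}. -/

import Mathlib

open Finset
open scoped Classical

namespace MW3PP

/-- A 3-path `xyz`: a path on three distinct vertices with middle vertex `y`. -/
structure P3 (V : Type*) where
  x : V
  y : V
  z : V
  hxy : x ≠ y
  hyz : y ≠ z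
  hxz : x ≠ z

variable {V : Type*} [Fintype V] [DecidableEq V]

/-- The vertex set of a 3-path. -/
def P3.verts (p : P3 V) : Finset V := {p.x, p.y, p.z}

/-- The two edges of a 3-path. -/
def P3.edges (p : P3 V) : Finset (Sym2 V) := {s(p.x, p.y), s(p.y, p.z)}

/-- The weight of a 3-path. -/
def P3.wt (w : Sym2 V → ℝ) (p : P3 V) : ℝ := w s(p.x, p.y) + w s(p.y, p.z)

/-- The total weight of a set of edges. -/
def ew (w : Sym2 V → ℝ) (F : Finset (Sym2 V)) : ℝ := ∑ e ∈ F, w e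

/-- The total weight of a set of 3-paths. -/
def pw (w : Sym2 V → ℝ) (P : Finset (P3 V)) : ℝ := ∑ p ∈ P, p.wt w

/-- `∑_{xyz ∈ S} max (w (xy)) (w (yz))`. -/
def maxSum (w : Sym2 V → ℝ) (S : Finset (P3 V)) : ℝ :=
  ∑ p ∈ S, max (w s(p.x, p.y)) (w s(p.y, p.z))

/-- A perfect 3-path packing: `n/3` pairwise vertex-disjoint 3-paths covering all vertices. -/
def IsPacking (P : Finset (P3 V)) : Prop :=
  P.card = Fintype.card V / 3 ∧
  (∀ p ∈ P, ∀ q ∈ P, p ≠ q → Disjoint p.verts q.verts) ∧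
  (∀ v : V, ∃ p ∈ P, v ∈ p.verts)

/-- A maximum-weight perfect 3-path packing. -/
def IsMaxPacking (w : Sym2 V → ℝ) (P : Finset (P3 V)) : Prop :=
  IsPacking P ∧ ∀ Q : Finset (P3 V), IsPacking Q → pw w Q ≤ pw w P

/-- A matching: a set of pairwise vertex-disjoint (non-loop) edges. -/
def IsMatching (M : Finset (Sym2 V)) : Prop :=
  (∀ e ∈ M, ¬ e.IsDiag) ∧
  ∀ e ∈ M, ∀ f ∈ M, e ≠ f → ∀ v : V, v ∈ e → v ∉ f

/-- A maximum-weight matching among all matchings of size `k`. -/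
def IsMaxMatchingOfSize (w : Sym2 V → ℝ) (k : ℕ) (M : Finset (Sym2 V)) : Prop :=
  IsMatching M ∧ M.card = k ∧
  ∀ M' : Finset (Sym2 V), IsMatching M' → M'.card = k → ew w M' ≤ ew w M

/-- `v ∈ V(M)` : vertex `v` is covered by the matching `M`. -/
def covered (M : Finset (Sym2 V)) (v : V) : Prop := ∃ e ∈ M, v ∈ e

/-- `e_u` : the edge of `M` containing `u` (junk value if there is none). -/
noncomputable def eMatch (M : Finset (Sym2 V)) (u : V) : Sym2 V :=
  if h : ∃ e ∈ M, u ∈ e then h.choose else s(u, u)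

/-- The cost `c` of an edge with respect to a matching `M`:
`c(uv) = w(uv) - min (w (e_u)) (w (e_v))` if both endpoints are covered by `M`,
and `c(uv) = w(uv)` otherwise. -/
noncomputable def cost (w : Sym2 V → ℝ) (M : Finset (Sym2 V)) : Sym2 V → ℝ :=
  Sym2.lift ⟨fun u v =>
    if covered M u ∧ covered M v then
      w s(u, v) - min (w (eMatch M u)) (w (eMatch M v))
    else w s(u, v), by
      intro u v
      dsimp only
      by_cases h : covered M u ∧ covered M v
      · rw [if_pos h, if_pos (show covered M v ∧ covered M u from ⟨h.2, h.1⟩),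
          Sym2.eq_swap, min_comm]
      · rw [if_neg h, if_neg (show ¬(covered M v ∧ covered M u) from fun h' => h ⟨h'.2, h'.1⟩),
          Sym2.eq_swap]⟩

/-- The total cost of a set of edges. -/
noncomputable def cw (w : Sym2 V → ℝ) (M F : Finset (Sym2 V)) : ℝ := ∑ e ∈ F, cost w M e

/-- The number of vertices of the 3-path `p` covered by `M`. -/
noncomputable def kcnt (M : Finset (Sym2 V)) (p : P3 V) : ℕ :=
  (p.verts.filter fun v => covered M v).card

/-- Exactly one of the two edges of `p` lies in `M`. -/
def exOne (M : Finset (Sym2 V)) (p : P3 V) : Prop :=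
  (s(p.x, p.y) ∈ M ∧ s(p.y, p.z) ∉ M) ∨ (s(p.x, p.y) ∉ M ∧ s(p.y, p.z) ∈ M)

def cls1 (M : Finset (Sym2 V)) (p : P3 V) : Prop := kcnt M p = 0
def cls2 (M : Finset (Sym2 V)) (p : P3 V) : Prop := kcnt M p = 1 ∧ ¬ covered M p.y
def cls3 (M : Finset (Sym2 V)) (p : P3 V) : Prop := kcnt M p = 1 ∧ covered M p.y
def cls4 (M : Finset (Sym2 V)) (p : P3 V) : Prop := kcnt M p = 2 ∧ ¬ covered M p.y
def cls5 (M : Finset (Sym2 V)) (p : P3 V) : Prop := kcnt M p = 2 ∧ covered M p.y ∧ exOne M p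
def cls6 (M : Finset (Sym2 V)) (p : P3 V) : Prop :=
  kcnt M p = 2 ∧ covered M p.y ∧ s(p.x, p.y) ∉ M ∧ s(p.y, p.z) ∉ M
def cls7 (M : Finset (Sym2 V)) (p : P3 V) : Prop := kcnt M p = 3 ∧ exOne M p
def cls8 (M : Finset (Sym2 V)) (p : P3 V) : Prop :=
  kcnt M p = 3 ∧ s(p.x, p.y) ∉ M ∧ s(p.y, p.z) ∉ M

/-- The subset of a set of 3-paths satisfying a predicate. -/
noncomputable def psel (P : Finset (P3 V)) (c : P3 V → Prop) : Finset (P3 V) := P.filter c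

/-- The set of all edges of the 3-paths in `S`. -/
def Esub (S : Finset (P3 V)) : Finset (Sym2 V) := S.biUnion P3.edges

/-- The heaviest edge of a 3-path (the edge `xy` in case of a tie). -/
noncomputable def heavy (w : Sym2 V → ℝ) (p : P3 V) : Sym2 V :=
  if w s(p.y, p.z) ≤ w s(p.x, p.y) then s(p.x, p.y) else s(p.y, p.z)

noncomputable def X1 (w : Sym2 V → ℝ) (P : Finset (P3 V)) (M : Finset (Sym2 V)) :
    Finset (Sym2 V) := (psel P (cls1 M)).image (heavy w)
noncomputable def X2 (P : Finset (P3 V)) (M : Finset (Sym2 V)) : Finset (Sym2 V) :=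
  (psel P (cls2 M)).image fun p => if covered M p.x then s(p.x, p.y) else s(p.y, p.z)
noncomputable def X3 (w : Sym2 V → ℝ) (P : Finset (P3 V)) (M : Finset (Sym2 V)) :
    Finset (Sym2 V) := (psel P (cls3 M)).image (heavy w)
noncomputable def X4 (w : Sym2 V → ℝ) (P : Finset (P3 V)) (M : Finset (Sym2 V)) :
    Finset (Sym2 V) := (psel P (cls4 M)).image (heavy w)
noncomputable def X5 (P : Finset (P3 V)) (M : Finset (Sym2 V)) : Finset (Sym2 V) :=
  (psel P (cls5 M)).image fun p => if s(p.x, p.y) ∈ M then s(p.y, p.z) else s(p.x, p.y)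
noncomputable def X6 (P : Finset (P3 V)) (M : Finset (Sym2 V)) : Finset (Sym2 V) :=
  (psel P (cls6 M)).image fun p => if covered M p.x then s(p.y, p.z) else s(p.x, p.y)
noncomputable def X7 (P : Finset (P3 V)) (M : Finset (Sym2 V)) : Finset (Sym2 V) :=
  (psel P (cls7 M)).image fun p => if s(p.x, p.y) ∈ M then s(p.y, p.z) else s(p.x, p.y)
noncomputable def X8 (w : Sym2 V → ℝ) (P : Finset (P3 V)) (M : Finset (Sym2 V)) :
    Finset (Sym2 V) := (psel P (cls8 M)).image (heavy w)

noncomputable def Y1 (w : Sym2 V → ℝ) (P : Finset (P3 V)) (M : Finset (Sym2 V)) :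
    Finset (Sym2 V) := Esub (psel P (cls1 M)) \ X1 w P M
noncomputable def Y2 (P : Finset (P3 V)) (M : Finset (Sym2 V)) : Finset (Sym2 V) :=
  Esub (psel P (cls2 M)) \ X2 P M
noncomputable def Y3 (w : Sym2 V → ℝ) (P : Finset (P3 V)) (M : Finset (Sym2 V)) :
    Finset (Sym2 V) := Esub (psel P (cls3 M)) \ X3 w P M
noncomputable def Y4 (w : Sym2 V → ℝ) (P : Finset (P3 V)) (M : Finset (Sym2 V)) :
    Finset (Sym2 V) := Esub (psel P (cls4 M)) \ X4 w P M
noncomputable def Y5 (P : Finset (P3 V)) (M : Finset (Sym2 V)) : Finset (Sym2 V) :=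
  Esub (psel P (cls5 M)) \ X5 P M
noncomputable def Y6 (P : Finset (P3 V)) (M : Finset (Sym2 V)) : Finset (Sym2 V) :=
  Esub (psel P (cls6 M)) \ X6 P M
noncomputable def Y7 (P : Finset (P3 V)) (M : Finset (Sym2 V)) : Finset (Sym2 V) :=
  Esub (psel P (cls7 M)) \ X7 P M
noncomputable def Y8 (w : Sym2 V → ℝ) (P : Finset (P3 V)) (M : Finset (Sym2 V)) :
    Finset (Sym2 V) := Esub (psel P (cls8 M)) \ X8 w P M

/-- An edge is a middle edge (w.r.t. `M`) if exactly one of its endpoints lies in `V(M)`. -/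
def isMiddle (M : Finset (Sym2 V)) (e : Sym2 V) : Prop :=
  ∃ u v : V, e = s(u, v) ∧ covered M u ∧ ¬ covered M v

/-- Two edges share a vertex. -/
def shares (e f : Sym2 V) : Prop := ∃ v, v ∈ e ∧ v ∈ f

/-- `g` is a middle edge of some 3-path in `S`. -/
def middleIn (M : Finset (Sym2 V)) (S : Finset (P3 V)) (g : Sym2 V) : Prop :=
  (∃ p ∈ S, g ∈ p.edges) ∧ isMiddle M g

/-- The 3-paths of `P` lying in classes 2, 3 or 4. -/
noncomputable def P234 (P : Finset (P3 V)) (M : Finset (Sym2 V)) : Finset (P3 V) :=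
  psel P fun p => cls2 M p ∨ cls3 M p ∨ cls4 M p

/-- `M_1`: edges of `M` sharing a vertex with at least one middle edge of a 3-path of `P*_6`. -/
noncomputable def Mset1 (P : Finset (P3 V)) (M : Finset (Sym2 V)) : Finset (Sym2 V) :=
  M.filter fun f => ∃ g, middleIn M (psel P (cls6 M)) g ∧ shares f g

/-- `M_2`: edges of `M` sharing a vertex with at least one middle edge, all middle edges met
belonging to 3-paths of `P*_2 ∪ P*_3 ∪ P*_4`. -/
noncomputable def Mset2 (P : Finset (P3 V)) (M : Finset (Sym2 V)) : Finset (Sym2 V) :=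
  M.filter fun f =>
    (∃ g, middleIn M P g ∧ shares f g) ∧
    ∀ g, middleIn M P g → shares f g → middleIn M (P234 P M) g

/-- `M_3 = M ∩ E(P*_7)`. -/
noncomputable def Mset3 (P : Finset (P3 V)) (M : Finset (Sym2 V)) : Finset (Sym2 V) :=
  M ∩ Esub (psel P (cls7 M))

/-- `M_4 = M ∩ E(P*_5)`. -/
noncomputable def Mset4 (P : Finset (P3 V)) (M : Finset (Sym2 V)) : Finset (Sym2 V) :=
  M ∩ Esub (psel P (cls5 M))

/-- The middle edges of 3-paths of `P*_6`. -/
noncomputable def mid6 (P : Finset (P3 V)) (M : Finset (Sym2 V)) : Finset (Sym2 V) :=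
  (Esub (psel P (cls6 M))).filter (isMiddle M)

/-- `M'_1`: edges of `M_1` meeting exactly one middle edge of a 3-path of `P*_6` and
no middle edge of a 3-path of `P*_2 ∪ P*_3 ∪ P*_4`. -/
noncomputable def Mset1' (P : Finset (P3 V)) (M : Finset (Sym2 V)) : Finset (Sym2 V) :=
  (Mset1 P M).filter fun f =>
    ((mid6 P M).filter fun g => shares f g).card = 1 ∧
    ∀ g, middleIn M (P234 P M) g → ¬ shares f g

/-- `M''_1`: edges of `M_1` meeting two middle edges of 3-paths of `P*_6`. -/
noncomputable def Mset1'' (P : Finset (P3 V)) (M : Finset (Sym2 V)) : Finset (Sym2 V) :=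
  (Mset1 P M).filter fun f => ((mid6 P M).filter fun g => shares f g).card = 2

/-- `M'''_1`: edges of `M_1` meeting exactly one middle edge of a 3-path of `P*_6` and
at least one middle edge of a 3-path of `P*_2 ∪ P*_3 ∪ P*_4`. -/
noncomputable def Mset1''' (P : Finset (P3 V)) (M : Finset (Sym2 V)) : Finset (Sym2 V) :=
  (Mset1 P M).filter fun f =>
    ((mid6 P M).filter fun g => shares f g).card = 1 ∧
    ∃ g, middleIn M (P234 P M) g ∧ shares f g

/-- Assumption on `P*`: for every 3-path `xyz ∈ P*` with `y ∉ V(M)` and `x, z ∈ V(M)`,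
the vertices `x` and `z` lie in two distinct edges of `M`. -/
def Ass (P : Finset (P3 V)) (M : Finset (Sym2 V)) : Prop :=
  ∀ p ∈ P, ¬ covered M p.y → covered M p.x → covered M p.z →
    ∃ e ∈ M, ∃ f ∈ M, p.x ∈ e ∧ p.z ∈ f ∧ e ≠ f

/-- An admissible edge w.r.t. `M`: either both endpoints are in `V(M)` and lie in two distinct
edges of `M`, or exactly one endpoint is in `V(M)`. -/
def goodEdge (M : Finset (Sym2 V)) (e : Sym2 V) : Prop :=
  (∃ u v : V, e = s(u, v) ∧ covered M u ∧ covered M v ∧ ∀ f ∈ M, ¬(u ∈ f ∧ v ∈ f)) ∨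
  (∃ u v : V, e = s(u, v) ∧ covered M u ∧ ¬ covered M v)


variable {M : Finset (Sym2 V)} {w : Sym2 V → ℝ}

omit [Fintype V] in
lemma covered_verts_of_kcnt_eq_three {p : P3 V} (h : kcnt M p = 3) :
    covered M p.x ∧ covered M p.y ∧ covered M p.z := by
  have hc : p.verts.card ≤ 3 := Finset.card_le_three
  have hf : p.verts.filter (fun v => covered M v) = p.verts :=
    Finset.eq_of_subset_of_card_le (Finset.filter_subset _ _) (by unfold kcnt at h; omega)
  rw [Finset.filter_eq_self] at hf
  exact ⟨hf _ (by simp [P3.verts]), hf _ (by simp [P3.verts]), hf _ (by simp [P3.verts])⟩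

omit [Fintype V] in
lemma covered_z_of_kcnt_eq_two {p : P3 V} (h : kcnt M p = 2) (hx : ¬ covered M p.x) :
    covered M p.z := by
  by_contra hz
  have hs : p.verts.filter (fun v => covered M v) ⊆ {p.y} := by
    intro v hv
    simp only [P3.verts, Finset.mem_filter, Finset.mem_insert, Finset.mem_singleton] at hv ⊢
    rcases hv with ⟨rfl | rfl | rfl, hv⟩
    · exact absurd hv hx
    · rfl
    · exact absurd hv hz
  have := Finset.card_le_card hs
  rw [Finset.card_singleton] at this
  unfold kcnt at h
  omega

/-- The edge of a path of class 5 that lies in `M`. -/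
noncomputable def innerEdge5 (M : Finset (Sym2 V)) (p : P3 V) : Sym2 V :=
  if s(p.x, p.y) ∈ M then s(p.x, p.y) else s(p.y, p.z)

/-- The edge of a path of class 6 with both endpoints covered by `M`. -/
noncomputable def innerEdge6 (M : Finset (Sym2 V)) (p : P3 V) : Sym2 V :=
  if covered M p.x then s(p.x, p.y) else s(p.y, p.z)

/-- The contribution of a path to the total weight the arcs have to reach. -/
noncomputable def gain (w : Sym2 V → ℝ) (M : Finset (Sym2 V)) (p : P3 V) : ℝ :=
  2 * (if cls5 M p then w (innerEdge5 M p) else 0) +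
    2 * (if cls6 M p then w (innerEdge6 M p) else 0) +
    (if cls7 M p then p.wt w else 0) + (if cls8 M p then p.wt w else 0) +
    if cls7 M p ∨ cls8 M p then max (w s(p.x, p.y)) (w s(p.y, p.z)) else 0

/-- Arcs inside the covered vertices of `p`, with in-degree at most 1 and out-degree at most 2,
of total weight at least `gain w M p`. -/
structure IsArcSystem (w : Sym2 V → ℝ) (M : Finset (Sym2 V)) (p : P3 V)
    (B : Finset (V × V)) : Prop where
  fst_mem : ∀ a ∈ B, a.1 ∈ p.verts
  snd_mem : ∀ a ∈ B, a.2 ∈ p.verts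
  covered_ne : ∀ a ∈ B, covered M a.1 ∧ covered M a.2 ∧ a.1 ≠ a.2
  card_in : ∀ v, (B.filter fun a => a.2 = v).card ≤ 1
  card_out : ∀ v, (B.filter fun a => a.1 = v).card ≤ 2
  gain_le : gain w M p ≤ ∑ a ∈ B, w s(a.1, a.2)

omit [Fintype V] in
lemma isArcSystem_pair {p : P3 V} {u v : V} (hu : u ∈ p.verts) (hv : v ∈ p.verts)
    (cu : covered M u) (cv : covered M v) (huv : u ≠ v)
    (hg : gain w M p ≤ 2 * w s(u, v)) : IsArcSystem w M p {(u, v), (v, u)} where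
  fst_mem := by simp [hu, hv]
  snd_mem := by simp [hu, hv]
  covered_ne := by simp [cu, cv, huv, huv.symm]
  card_in t := by
    refine Finset.card_le_one.2 fun a ha b hb => ?_
    simp only [Finset.mem_filter, Finset.mem_insert, Finset.mem_singleton] at ha hb
    grind
  card_out t := (Finset.card_filter_le _ _).trans Finset.card_le_two
  gain_le := by
    rw [Finset.sum_pair (by grind), Sym2.eq_swap (a := v)]
    linarith

omit [Fintype V] in
lemma isArcSystem_triple {p : P3 V} {u : V} (hu : u = p.x ∨ u = p.z)
    (cx : covered M p.x) (cy : covered M p.y) (cz : covered M p.z)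
    (hg : gain w M p ≤ p.wt w + w s(u, p.y)) :
    IsArcSystem w M p {(p.y, p.x), (p.y, p.z), (u, p.y)} := by
  obtain ⟨x, y, z, hxy, hyz, hxz⟩ := p
  dsimp only at *
  refine ⟨?_, ?_, ?_, fun t => ?_, fun t => ?_, ?_⟩
  · rcases hu with rfl | rfl <;> simp [P3.verts]
  · simp [P3.verts]
  · rcases hu with rfl | rfl <;> simp [cx, cy, cz, hxy, hxy.symm, hyz, hyz.symm]
  · refine Finset.card_le_one.2 fun a ha b hb => ?_
    simp only [Finset.mem_filter, Finset.mem_insert, Finset.mem_singleton] at ha hb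
    grind
  · by_cases ht : t = y
    · refine (Finset.card_le_card (t := {(y, x), (y, z)}) fun a ha => ?_).trans Finset.card_le_two
      simp only [Finset.mem_filter, Finset.mem_insert, Finset.mem_singleton] at ha ⊢
      grind
    · refine (Finset.card_le_card (t := {(u, y)}) fun a ha => ?_).trans (by simp)
      simp only [Finset.mem_filter, Finset.mem_insert, Finset.mem_singleton] at ha ⊢
      grind
  · rw [Finset.sum_insert (by grind), Finset.sum_pair (by grind)]
    simp only [P3.wt] at hg
    rw [Sym2.eq_swap (a := y) (b := x)]
    linarith

omit [Fintype V] in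
lemma exists_isArcSystem (p : P3 V) : ∃ B, IsArcSystem w M p B := by
  have hx : p.x ∈ p.verts := by simp [P3.verts]
  have hy : p.y ∈ p.verts := by simp [P3.verts]
  have hz : p.z ∈ p.verts := by simp [P3.verts]
  by_cases h5 : cls5 M p
  · have n6 : ¬ cls6 M p := by rintro ⟨-, -, h, h'⟩; have := h5.2.2; unfold exOne at this; tauto
    have n7 : ¬ cls7 M p := fun h => by have := h.1; have := h5.1; omega
    have n8 : ¬ cls8 M p := fun h => by have := h.1; have := h5.1; omega
    by_cases hxy : s(p.x, p.y) ∈ M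
    · exact ⟨_, isArcSystem_pair hx hy ⟨_, hxy, by simp⟩ h5.2.1 p.hxy
        (by simp [gain, innerEdge5, *])⟩
    · have hyz : s(p.y, p.z) ∈ M := by have := h5.2.2; unfold exOne at this; tauto
      exact ⟨_, isArcSystem_pair hy hz h5.2.1 ⟨_, hyz, by simp⟩ p.hyz
        (by simp [gain, innerEdge5, *])⟩
  by_cases h6 : cls6 M p
  · have n7 : ¬ cls7 M p := fun h => by have := h.1; have := h6.1; omega
    have n8 : ¬ cls8 M p := fun h => by have := h.1; have := h6.1; omega
    by_cases cx : covered M p.x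
    · exact ⟨_, isArcSystem_pair hx hy cx h6.2.1 p.hxy (by simp [gain, innerEdge6, *])⟩
    · exact ⟨_, isArcSystem_pair hy hz h6.2.1 (covered_z_of_kcnt_eq_two h6.1 cx) p.hyz
        (by simp [gain, innerEdge6, *])⟩
  by_cases h78 : cls7 M p ∨ cls8 M p
  · obtain ⟨cx, cy, cz⟩ := covered_verts_of_kcnt_eq_three (h78.elim And.left And.left)
    have hg : gain w M p = p.wt w + max (w s(p.x, p.y)) (w s(p.y, p.z)) := by
      rcases h78 with h7 | h8
      · have n8 : ¬ cls8 M p := by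
          rintro ⟨-, h, h'⟩; have := h7.2; unfold exOne at this; tauto
        simp [gain, *]
      · have n7 : ¬ cls7 M p := by
          rintro ⟨-, h⟩; have := h8.2; unfold exOne at h; tauto
        simp [gain, *]
    rcases le_total (w s(p.y, p.z)) (w s(p.x, p.y)) with h | h
    · exact ⟨_, isArcSystem_triple (.inl rfl) cx cy cz (by rw [hg, max_eq_left h])⟩
    · exact ⟨_, isArcSystem_triple (.inr rfl) cx cy cz
        (by rw [hg, max_eq_right h, Sym2.eq_swap])⟩
  · rw [not_or] at h78
    exact ⟨∅, by simp, by simp, by simp, by simp, by simp, by simp [gain, *]⟩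

omit [Fintype V] in
lemma ew_image_le (hw : ∀ e, 0 ≤ w e) (S : Finset (P3 V)) (f : P3 V → Sym2 V)
    {F : Finset (Sym2 V)} (hF : F ⊆ S.image f) : ew w F ≤ ∑ p ∈ S, w (f p) :=
  (Finset.sum_le_sum_of_subset_of_nonneg hF fun e _ _ => hw e).trans
    (Finset.sum_image_le_of_nonneg fun _ _ => hw _)

omit [Fintype V] in
lemma ew_Esub_le (hw : ∀ e, 0 ≤ w e) (S : Finset (P3 V)) :
    ew w (Esub S) ≤ ∑ p ∈ S, p.wt w := by
  have h : Esub S = S.image (fun p => s(p.x, p.y)) ∪ S.image fun p => s(p.y, p.z) := by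
    ext e
    simp only [Esub, P3.edges, Finset.mem_biUnion, Finset.mem_union, Finset.mem_image,
      Finset.mem_insert, Finset.mem_singleton]
    grind
  have hu : ew w (Esub S) ≤ ew w (S.image fun p => s(p.x, p.y)) +
      ew w (S.image fun p => s(p.y, p.z)) := by
    rw [h, ew, ew, ew, ← Finset.sum_union_inter]
    exact le_add_of_nonneg_right (Finset.sum_nonneg fun e _ => hw e)
  have h₁ := ew_image_le hw S (fun p => s(p.x, p.y)) subset_rfl
  have h₂ := ew_image_le hw S (fun p => s(p.y, p.z)) subset_rfl
  simp only [P3.wt, Finset.sum_add_distrib]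
  linarith

omit [Fintype V] in
lemma ew_Y5_le (hw : ∀ e, 0 ≤ w e) (P : Finset (P3 V)) :
    ew w (Y5 P M) ≤ ∑ p ∈ psel P (cls5 M), w (innerEdge5 M p) := by
  refine ew_image_le hw _ _ fun e he => ?_
  simp only [Y5, X5, Esub, P3.edges, innerEdge5, Finset.mem_sdiff, Finset.mem_biUnion,
    Finset.mem_image, Finset.mem_insert, Finset.mem_singleton, not_exists, not_and] at he ⊢
  grind

omit [Fintype V] in
lemma ew_Y6_le (hw : ∀ e, 0 ≤ w e) (P : Finset (P3 V)) :
    ew w (Y6 P M) ≤ ∑ p ∈ psel P (cls6 M), w (innerEdge6 M p) := by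
  refine ew_image_le hw _ _ fun e he => ?_
  simp only [Y6, X6, Esub, P3.edges, innerEdge6, Finset.mem_sdiff, Finset.mem_biUnion,
    Finset.mem_image, Finset.mem_insert, Finset.mem_singleton, not_exists, not_and] at he ⊢
  grind

omit [Fintype V] in
lemma card_filter_biUnion_le {P : Finset (P3 V)} {B : P3 V → Finset (V × V)}
    (hP : ∀ p ∈ P, ∀ q ∈ P, p ≠ q → Disjoint p.verts q.verts) (f : V × V → V)
    (hf : ∀ p, ∀ a ∈ B p, f a ∈ p.verts) {k : ℕ} (v : V)
    (hk : ∀ p, ((B p).filter fun a => f a = v).card ≤ k) :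
    ((P.biUnion B).filter fun a => f a = v).card ≤ k := by
  by_cases hv : ∃ p ∈ P, v ∈ p.verts
  · obtain ⟨p, hp, hvp⟩ := hv
    refine (Finset.card_le_card fun a ha => ?_).trans (hk p)
    simp only [Finset.mem_filter, Finset.mem_biUnion] at ha ⊢
    obtain ⟨⟨q, hq, haq⟩, rfl⟩ := ha
    by_cases hpq : p = q
    · exact ⟨hpq ▸ haq, rfl⟩
    · exact absurd (hf q a haq) (Finset.disjoint_left.1 (hP p hp q hq hpq) hvp)
  · rw [Finset.filter_false_of_mem]
    · simp
    · rintro a ha rfl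
      obtain ⟨p, hp, hap⟩ := Finset.mem_biUnion.1 ha
      exact hv ⟨p, hp, hf p a hap⟩

theorem statement_15 (n : ℕ) (hn : Fintype.card V = n) (h3 : 3 ∣ n)
    (w : Sym2 V → ℝ) (hw : ∀ e : Sym2 V, 0 ≤ w e)
    (M : Finset (Sym2 V)) (hM : IsMaxMatchingOfSize w (n / 3) M)
    (Pstar : Finset (P3 V)) (hP : IsMaxPacking w Pstar) (hAss : Ass Pstar M) :
    ∃ A : Finset (V × V),
      (∀ a ∈ A, covered M a.1 ∧ covered M a.2 ∧ a.1 ≠ a.2) ∧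
      (∀ v : V, (A.filter fun a => a.2 = v).card ≤ 1) ∧
      (∀ v : V, (A.filter fun a => a.1 = v).card ≤ 2) ∧
      2 * ew w (Y5 Pstar M) + 2 * ew w (Y6 Pstar M) + ew w (Esub (psel Pstar (cls7 M))) +
        ew w (Esub (psel Pstar (cls8 M))) +
        maxSum w (psel Pstar fun p => cls7 M p ∨ cls8 M p) ≤
        ∑ a ∈ A, w s(a.1, a.2) := by
  obtain ⟨⟨-, hdisj, -⟩, -⟩ := hP
  choose B hB using exists_isArcSystem (w := w) (M := M)
  refine ⟨Pstar.biUnion B, ?_, fun v => ?_, fun v => ?_, ?_⟩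
  · intro a ha
    obtain ⟨p, -, hap⟩ := Finset.mem_biUnion.1 ha
    exact (hB p).covered_ne a hap
  · exact card_filter_biUnion_le hdisj Prod.snd (fun p => (hB p).snd_mem) v
      fun p => (hB p).card_in v
  · exact card_filter_biUnion_le hdisj Prod.fst (fun p => (hB p).fst_mem) v
      fun p => (hB p).card_out v
  have hBdisj : (Pstar : Set (P3 V)).PairwiseDisjoint B := fun p hp q hq hpq =>
    Finset.disjoint_left.2 fun a hap haq => Finset.disjoint_left.1 (hdisj p hp q hq hpq)
      ((hB p).fst_mem a hap) ((hB q).fst_mem a haq)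
  rw [Finset.sum_biUnion hBdisj]
  refine le_trans ?_ (Finset.sum_le_sum fun p _ => (hB p).gain_le)
  have h5 := ew_Y5_le (M := M) hw Pstar
  have h6 := ew_Y6_le (M := M) hw Pstar
  have h7 := ew_Esub_le hw (psel Pstar (cls7 M))
  have h8 := ew_Esub_le hw (psel Pstar (cls8 M))
  have hsum : ∑ p ∈ Pstar, gain w M p =
      2 * ∑ p ∈ psel Pstar (cls5 M), w (innerEdge5 M p) +
        2 * ∑ p ∈ psel Pstar (cls6 M), w (innerEdge6 M p) +
        ∑ p ∈ psel Pstar (cls7 M), p.wt w + ∑ p ∈ psel Pstar (cls8 M), p.wt w +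
        maxSum w (psel Pstar fun p => cls7 M p ∨ cls8 M p) := by
    simp only [gain, maxSum, psel, Finset.sum_add_distrib, ← Finset.mul_sum, Finset.sum_filter]
    congr!
  linarith

end MW3PP
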